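/- For all indices i,j,l ∈ {1,…,7} and every vector α ∈ ℝ⁷: Σ_{σ∈S₇} sgn(σ) α_{σ(1)} φ_{i l σ(2)} φ_{j σ(3) σ(4)} φ_{σ(5) σ(6) σ(7)} = 24 (δ_{lj} α_i − δ_{ij} α_l + Σ_k ψ_{iljk} α_k). (This is the coordinate form of the identity ∗((v⌐w⌐φ)∧(u⌐φ)∧φ) = 2 g(u,v) w♭ − 2 g(u,w) v♭ + 2 (u⌐v⌐w⌐ψ) for the standard G₂-structure.) -/

import Mathlib

open Finset

noncomputable section

def phi0 : Fin 7 → Fin 7 → Fin 7 → ℝ := fun i j k =>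
  if (i, j, k) = (0, 1, 2) then -1
  else if (i, j, k) = (0, 3, 4) then -1
  else if (i, j, k) = (0, 5, 6) then -1
  else if (i, j, k) = (1, 3, 5) then -1
  else if (i, j, k) = (1, 4, 6) then 1
  else if (i, j, k) = (2, 3, 6) then 1
  else if (i, j, k) = (2, 4, 5) then 1
  else 0

/-- The standard G₂ 3-form on ℝ⁷ (paper's orientation convention), as a totally
antisymmetric array with `φ₁₂₃ = φ₁₄₅ = φ₁₆₇ = φ₂₄₆ = −1`, `φ₂₅₇ = φ₃₄₇ = φ₃₅₆ = 1`
(indices shifted to start at 0). -/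
def phi (i j k : Fin 7) : ℝ :=
  ∑ σ : Equiv.Perm (Fin 3),
    ((Equiv.Perm.sign σ : ℤ) : ℝ) *
      phi0 (![i, j, k] (σ 0)) (![i, j, k] (σ 1)) (![i, j, k] (σ 2))

def psi0 : Fin 7 → Fin 7 → Fin 7 → Fin 7 → ℝ := fun i j k l =>
  if (i, j, k, l) = (0, 1, 3, 6) then 1
  else if (i, j, k, l) = (0, 1, 4, 5) then 1
  else if (i, j, k, l) = (0, 2, 3, 5) then 1
  else if (i, j, k, l) = (0, 2, 4, 6) then -1
  else if (i, j, k, l) = (1, 2, 3, 4) then -1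
  else if (i, j, k, l) = (1, 2, 5, 6) then -1
  else if (i, j, k, l) = (3, 4, 5, 6) then -1
  else 0

/-- The dual 4-form ψ = ∗φ of the standard G₂-structure, as a totally antisymmetric
array with `ψ₁₂₄₇ = ψ₁₂₅₆ = ψ₁₃₄₆ = 1`, `ψ₁₃₅₇ = ψ₂₃₄₅ = ψ₂₃₆₇ = ψ₄₅₆₇ = −1`
(indices shifted to start at 0). -/
def psi (i j k l : Fin 7) : ℝ :=
  ∑ σ : Equiv.Perm (Fin 4),
    ((Equiv.Perm.sign σ : ℤ) : ℝ) *
      psi0 (![i, j, k, l] (σ 0)) (![i, j, k, l] (σ 1)) (![i, j, k, l] (σ 2))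
        (![i, j, k, l] (σ 3))

/-- Kronecker delta. -/
def kdelta (i j : Fin 7) : ℝ := if i = j then 1 else 0

/-- The G₂ cross product on ℝ⁷: `(u × v)_k = Σ_{i,j} φ_{ijk} u_i v_j`. -/
def cross (u v : Fin 7 → ℝ) : Fin 7 → ℝ := fun k =>
  ∑ i, ∑ j, phi i j k * u i * v j

/-- Euclidean inner product on ℝ⁷. -/
def dot (u v : Fin 7 → ℝ) : ℝ := ∑ i, u i * v i

end

section helper

variable {R : Type*} [CommRing R]

def A2 (F : Fin 7 → Fin 7 → R) (a b : Fin 7) : R := F a b - F b a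

def A3 (F : Fin 7 → Fin 7 → Fin 7 → R) (a b c : Fin 7) : R :=
  A2 (F a) b c - (A2 (F b) a c + A2 (F c) b a)

def A4 (F : Fin 7 → Fin 7 → Fin 7 → Fin 7 → R) (a b c d : Fin 7) : R :=
  A3 (F a) b c d - (A3 (F b) a c d + A3 (F c) b a d + A3 (F d) b c a)

def A5 (F : Fin 7 → Fin 7 → Fin 7 → Fin 7 → Fin 7 → R) (a b c d e : Fin 7) : R :=
  A4 (F a) b c d e - (A4 (F b) a c d e + A4 (F c) b a d e + A4 (F d) b c a e
    + A4 (F e) b c d a)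

def A6 (F : Fin 7 → Fin 7 → Fin 7 → Fin 7 → Fin 7 → Fin 7 → R) (a b c d e f : Fin 7) : R :=
  A5 (F a) b c d e f - (A5 (F b) a c d e f + A5 (F c) b a d e f + A5 (F d) b c a e f
    + A5 (F e) b c d a f + A5 (F f) b c d e a)

def A7 (F : Fin 7 → Fin 7 → Fin 7 → Fin 7 → Fin 7 → Fin 7 → Fin 7 → R)
    (a b c d e f g : Fin 7) : R :=
  A6 (F a) b c d e f g - (A6 (F b) a c d e f g + A6 (F c) b a d e f g + A6 (F d) b c a e f g
    + A6 (F e) b c d a f g + A6 (F f) b c d e a g + A6 (F g) b c d e f a)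

theorem sum_step (n : ℕ) (F : Equiv.Perm (Fin (n + 1)) → R) :
    ∑ σ : Equiv.Perm (Fin (n + 1)), ((Equiv.Perm.sign σ : ℤ) : R) * F σ
      = ∑ e : Equiv.Perm (Fin n), ((Equiv.Perm.sign e : ℤ) : R) *
          F (Equiv.Perm.decomposeFin.symm (0, e))
        - ∑ p : Fin n, ∑ e : Equiv.Perm (Fin n), ((Equiv.Perm.sign e : ℤ) : R) *
          F (Equiv.Perm.decomposeFin.symm (p.succ, e)) := by
  rw [← Equiv.sum_comp Equiv.Perm.decomposeFin.symm, Fintype.sum_prod_type, Fin.sum_univ_succ]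
  simp [Equiv.Perm.decomposeFin.symm_sign, Fin.succ_ne_zero, Finset.sum_neg_distrib,
    sub_eq_add_neg]

theorem sum_A2 (v : Fin 2 → Fin 7) (F : Fin 7 → Fin 7 → R) :
    ∑ σ : Equiv.Perm (Fin 2), ((Equiv.Perm.sign σ : ℤ) : R) * F (v (σ 0)) (v (σ 1))
      = A2 F (v 0) (v 1) := by
  rw [sum_step]
  simp [A2]

theorem sum_A3 (v : Fin 3 → Fin 7) (F : Fin 7 → Fin 7 → Fin 7 → R) :
    ∑ σ : Equiv.Perm (Fin 3), ((Equiv.Perm.sign σ : ℤ) : R) *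
        F (v (σ 0)) (v (σ 1)) (v (σ 2))
      = A3 F (v 0) (v 1) (v 2) := by
  have key : ∀ p : Fin 3, ∑ e : Equiv.Perm (Fin 2), ((Equiv.Perm.sign e : ℤ) : R) *
      (fun σ : Equiv.Perm (Fin 3) => F (v (σ 0)) (v (σ 1)) (v (σ 2)))
        (Equiv.Perm.decomposeFin.symm (p, e))
      = A2 (F (v p)) (v (Equiv.swap 0 p 1)) (v (Equiv.swap 0 p 2)) := by
    intro p
    refine Eq.trans ?_ (sum_A2 (fun x => v (Equiv.swap 0 p x.succ)) (F (v p)))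
    refine Finset.sum_congr rfl fun e _ => ?_
    have h0 := Equiv.Perm.decomposeFin_symm_apply_zero p e
    have h := fun x => Equiv.Perm.decomposeFin_symm_apply_succ e p x
    have h1 : Equiv.Perm.decomposeFin.symm (p, e) (1 : Fin 3) = _ := h 0
    have h2 : Equiv.Perm.decomposeFin.symm (p, e) (2 : Fin 3) = _ := h 1
    simp only [h0, h1, h2]
  have hs := sum_step 2 (fun σ : Equiv.Perm (Fin 3) => F (v (σ 0)) (v (σ 1)) (v (σ 2)) : _ → R)
  simp only [key] at hs
  rw [hs, Fin.sum_univ_two]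
  rfl

theorem sum_A4 (v : Fin 4 → Fin 7) (F : Fin 7 → Fin 7 → Fin 7 → Fin 7 → R) :
    ∑ σ : Equiv.Perm (Fin 4), ((Equiv.Perm.sign σ : ℤ) : R) *
        F (v (σ 0)) (v (σ 1)) (v (σ 2)) (v (σ 3))
      = A4 F (v 0) (v 1) (v 2) (v 3) := by
  have key : ∀ p : Fin 4, ∑ e : Equiv.Perm (Fin 3), ((Equiv.Perm.sign e : ℤ) : R) *
      (fun σ : Equiv.Perm (Fin 4) => F (v (σ 0)) (v (σ 1)) (v (σ 2)) (v (σ 3)))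
        (Equiv.Perm.decomposeFin.symm (p, e))
      = A3 (F (v p)) (v (Equiv.swap 0 p 1)) (v (Equiv.swap 0 p 2)) (v (Equiv.swap 0 p 3)) := by
    intro p
    refine Eq.trans ?_ (sum_A3 (fun x => v (Equiv.swap 0 p x.succ)) (F (v p)))
    refine Finset.sum_congr rfl fun e _ => ?_
    have h0 := Equiv.Perm.decomposeFin_symm_apply_zero p e
    have h := fun x => Equiv.Perm.decomposeFin_symm_apply_succ e p x
    have h1 : Equiv.Perm.decomposeFin.symm (p, e) (1 : Fin 4) = _ := h 0
    have h2 : Equiv.Perm.decomposeFin.symm (p, e) (2 : Fin 4) = _ := h 1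
    have h3 : Equiv.Perm.decomposeFin.symm (p, e) (3 : Fin 4) = _ := h 2
    simp only [h0, h1, h2, h3]
  have hs := sum_step 3 (fun σ : Equiv.Perm (Fin 4) => F (v (σ 0)) (v (σ 1)) (v (σ 2)) (v (σ 3)) : _ → R)
  simp only [key] at hs
  rw [hs, Fin.sum_univ_three]
  rfl

theorem sum_A5 (v : Fin 5 → Fin 7) (F : Fin 7 → Fin 7 → Fin 7 → Fin 7 → Fin 7 → R) :
    ∑ σ : Equiv.Perm (Fin 5), ((Equiv.Perm.sign σ : ℤ) : R) *
        F (v (σ 0)) (v (σ 1)) (v (σ 2)) (v (σ 3)) (v (σ 4))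
      = A5 F (v 0) (v 1) (v 2) (v 3) (v 4) := by
  have key : ∀ p : Fin 5, ∑ e : Equiv.Perm (Fin 4), ((Equiv.Perm.sign e : ℤ) : R) *
      (fun σ : Equiv.Perm (Fin 5) => F (v (σ 0)) (v (σ 1)) (v (σ 2)) (v (σ 3)) (v (σ 4)))
        (Equiv.Perm.decomposeFin.symm (p, e))
      = A4 (F (v p)) (v (Equiv.swap 0 p 1)) (v (Equiv.swap 0 p 2)) (v (Equiv.swap 0 p 3)) (v (Equiv.swap 0 p 4)) := by
    intro p
    refine Eq.trans ?_ (sum_A4 (fun x => v (Equiv.swap 0 p x.succ)) (F (v p)))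
    refine Finset.sum_congr rfl fun e _ => ?_
    have h0 := Equiv.Perm.decomposeFin_symm_apply_zero p e
    have h := fun x => Equiv.Perm.decomposeFin_symm_apply_succ e p x
    have h1 : Equiv.Perm.decomposeFin.symm (p, e) (1 : Fin 5) = _ := h 0
    have h2 : Equiv.Perm.decomposeFin.symm (p, e) (2 : Fin 5) = _ := h 1
    have h3 : Equiv.Perm.decomposeFin.symm (p, e) (3 : Fin 5) = _ := h 2
    have h4 : Equiv.Perm.decomposeFin.symm (p, e) (4 : Fin 5) = _ := h 3
    simp only [h0, h1, h2, h3, h4]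
  have hs := sum_step 4 (fun σ : Equiv.Perm (Fin 5) => F (v (σ 0)) (v (σ 1)) (v (σ 2)) (v (σ 3)) (v (σ 4)) : _ → R)
  simp only [key] at hs
  rw [hs, Fin.sum_univ_four]
  rfl

theorem sum_A6 (v : Fin 6 → Fin 7) (F : Fin 7 → Fin 7 → Fin 7 → Fin 7 → Fin 7 → Fin 7 → R) :
    ∑ σ : Equiv.Perm (Fin 6), ((Equiv.Perm.sign σ : ℤ) : R) *
        F (v (σ 0)) (v (σ 1)) (v (σ 2)) (v (σ 3)) (v (σ 4)) (v (σ 5))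
      = A6 F (v 0) (v 1) (v 2) (v 3) (v 4) (v 5) := by
  have key : ∀ p : Fin 6, ∑ e : Equiv.Perm (Fin 5), ((Equiv.Perm.sign e : ℤ) : R) *
      (fun σ : Equiv.Perm (Fin 6) => F (v (σ 0)) (v (σ 1)) (v (σ 2)) (v (σ 3)) (v (σ 4)) (v (σ 5)))
        (Equiv.Perm.decomposeFin.symm (p, e))
      = A5 (F (v p)) (v (Equiv.swap 0 p 1)) (v (Equiv.swap 0 p 2)) (v (Equiv.swap 0 p 3)) (v (Equiv.swap 0 p 4)) (v (Equiv.swap 0 p 5)) := by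
    intro p
    refine Eq.trans ?_ (sum_A5 (fun x => v (Equiv.swap 0 p x.succ)) (F (v p)))
    refine Finset.sum_congr rfl fun e _ => ?_
    have h0 := Equiv.Perm.decomposeFin_symm_apply_zero p e
    have h := fun x => Equiv.Perm.decomposeFin_symm_apply_succ e p x
    have h1 : Equiv.Perm.decomposeFin.symm (p, e) (1 : Fin 6) = _ := h 0
    have h2 : Equiv.Perm.decomposeFin.symm (p, e) (2 : Fin 6) = _ := h 1
    have h3 : Equiv.Perm.decomposeFin.symm (p, e) (3 : Fin 6) = _ := h 2
    have h4 : Equiv.Perm.decomposeFin.symm (p, e) (4 : Fin 6) = _ := h 3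
    have h5 : Equiv.Perm.decomposeFin.symm (p, e) (5 : Fin 6) = _ := h 4
    simp only [h0, h1, h2, h3, h4, h5]
  have hs := sum_step 5 (fun σ : Equiv.Perm (Fin 6) => F (v (σ 0)) (v (σ 1)) (v (σ 2)) (v (σ 3)) (v (σ 4)) (v (σ 5)) : _ → R)
  simp only [key] at hs
  rw [hs, Fin.sum_univ_five]
  rfl

theorem sum_A7 (v : Fin 7 → Fin 7) (F : Fin 7 → Fin 7 → Fin 7 → Fin 7 → Fin 7 → Fin 7 → Fin 7 → R) :
    ∑ σ : Equiv.Perm (Fin 7), ((Equiv.Perm.sign σ : ℤ) : R) *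
        F (v (σ 0)) (v (σ 1)) (v (σ 2)) (v (σ 3)) (v (σ 4)) (v (σ 5)) (v (σ 6))
      = A7 F (v 0) (v 1) (v 2) (v 3) (v 4) (v 5) (v 6) := by
  have key : ∀ p : Fin 7, ∑ e : Equiv.Perm (Fin 6), ((Equiv.Perm.sign e : ℤ) : R) *
      (fun σ : Equiv.Perm (Fin 7) => F (v (σ 0)) (v (σ 1)) (v (σ 2)) (v (σ 3)) (v (σ 4)) (v (σ 5)) (v (σ 6)))
        (Equiv.Perm.decomposeFin.symm (p, e))
      = A6 (F (v p)) (v (Equiv.swap 0 p 1)) (v (Equiv.swap 0 p 2)) (v (Equiv.swap 0 p 3)) (v (Equiv.swap 0 p 4)) (v (Equiv.swap 0 p 5)) (v (Equiv.swap 0 p 6)) := by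
    intro p
    refine Eq.trans ?_ (sum_A6 (fun x => v (Equiv.swap 0 p x.succ)) (F (v p)))
    refine Finset.sum_congr rfl fun e _ => ?_
    have h0 := Equiv.Perm.decomposeFin_symm_apply_zero p e
    have h := fun x => Equiv.Perm.decomposeFin_symm_apply_succ e p x
    have h1 : Equiv.Perm.decomposeFin.symm (p, e) (1 : Fin 7) = _ := h 0
    have h2 : Equiv.Perm.decomposeFin.symm (p, e) (2 : Fin 7) = _ := h 1
    have h3 : Equiv.Perm.decomposeFin.symm (p, e) (3 : Fin 7) = _ := h 2
    have h4 : Equiv.Perm.decomposeFin.symm (p, e) (4 : Fin 7) = _ := h 3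
    have h5 : Equiv.Perm.decomposeFin.symm (p, e) (5 : Fin 7) = _ := h 4
    have h6 : Equiv.Perm.decomposeFin.symm (p, e) (6 : Fin 7) = _ := h 5
    simp only [h0, h1, h2, h3, h4, h5, h6]
  have hs := sum_step 6 (fun σ : Equiv.Perm (Fin 7) => F (v (σ 0)) (v (σ 1)) (v (σ 2)) (v (σ 3)) (v (σ 4)) (v (σ 5)) (v (σ 6)) : _ → R)
  simp only [key] at hs
  rw [hs, Fin.sum_univ_six]
  rfl

def phi0Z : Fin 7 → Fin 7 → Fin 7 → ℤ := fun i j k =>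
  if (i, j, k) = (0, 1, 2) then -1
  else if (i, j, k) = (0, 3, 4) then -1
  else if (i, j, k) = (0, 5, 6) then -1
  else if (i, j, k) = (1, 3, 5) then -1
  else if (i, j, k) = (1, 4, 6) then 1
  else if (i, j, k) = (2, 3, 6) then 1
  else if (i, j, k) = (2, 4, 5) then 1
  else 0

def psi0Z : Fin 7 → Fin 7 → Fin 7 → Fin 7 → ℤ := fun i j k l =>
  if (i, j, k, l) = (0, 1, 3, 6) then 1
  else if (i, j, k, l) = (0, 1, 4, 5) then 1
  else if (i, j, k, l) = (0, 2, 3, 5) then 1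
  else if (i, j, k, l) = (0, 2, 4, 6) then -1
  else if (i, j, k, l) = (1, 2, 3, 4) then -1
  else if (i, j, k, l) = (1, 2, 5, 6) then -1
  else if (i, j, k, l) = (3, 4, 5, 6) then -1
  else 0

def phiZ (i j k : Fin 7) : ℤ :=
  bif Nat.testBit 0x20000820000000008800800820002000000800000008080000820000200008800000008800080008000
    (49 * i.val + 7 * j.val + k.val) then 1
  else bif Nat.testBit 0x820000800800800008000000000820080008080800000820000000008800008008000020002000200
    (49 * i.val + 7 * j.val + k.val) then -1
  else 0

theorem phiZ_eq : ∀ i j k, A3 phi0Z i j k = phiZ i j k := by decide +kernel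

theorem phi_cast (i j k : Fin 7) : phi i j k = (phiZ i j k : ℝ) := by
  have h : ∀ i j k, phi0 i j k = (phi0Z i j k : ℝ) := by
    intro i j k
    unfold phi0 phi0Z
    push_cast
    rfl
  rw [← phiZ_eq]
  refine (sum_A3 ![i, j, k] phi0).trans ?_
  simp [A3, A2, h]

theorem psi_cast (i j k l : Fin 7) : psi i j k l = ((A4 psi0Z i j k l : ℤ) : ℝ) := by
  have h : ∀ i j k l, psi0 i j k l = (psi0Z i j k l : ℝ) := by
    intro i j k l
    unfold psi0 psi0Z
    push_cast
    rfl
  refine (sum_A4 ![i, j, k, l] psi0).trans ?_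
  simp [A4, A3, A2, h]

def GZ (j c d e f g : Fin 7) : ℤ := phiZ j c d * phiZ e f g

theorem A5lin (x y : ℝ) (j c d e f g : Fin 7) :
    A5 (fun c d e f g => x * y * phi j c d * phi e f g) c d e f g
      = x * y * ((A5 (GZ j) c d e f g : ℤ) : ℝ) := by
  simp only [A5, A4, A3, A2, GZ, phi_cast]
  push_cast
  ring

theorem hT : ∀ j : Fin 7,
    A5 (GZ j) 2 3 4 5 6 = -24 * phiZ j 0 1
    ∧ A5 (GZ j) 1 3 4 5 6 = 24 * phiZ j 0 2
    ∧ A5 (GZ j) 2 1 4 5 6 = 24 * phiZ j 0 3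
    ∧ A5 (GZ j) 2 3 1 5 6 = 24 * phiZ j 0 4
    ∧ A5 (GZ j) 2 3 4 1 6 = 24 * phiZ j 0 5
    ∧ A5 (GZ j) 2 3 4 5 1 = 24 * phiZ j 0 6
    ∧ A5 (GZ j) 2 3 4 5 6 = 24 * phiZ j 1 0
    ∧ A5 (GZ j) 0 3 4 5 6 = -24 * phiZ j 1 2
    ∧ A5 (GZ j) 2 0 4 5 6 = -24 * phiZ j 1 3
    ∧ A5 (GZ j) 2 3 0 5 6 = -24 * phiZ j 1 4
    ∧ A5 (GZ j) 2 3 4 0 6 = -24 * phiZ j 1 5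
    ∧ A5 (GZ j) 2 3 4 5 0 = -24 * phiZ j 1 6
    ∧ A5 (GZ j) 0 3 4 5 6 = 24 * phiZ j 2 1
    ∧ A5 (GZ j) 1 3 4 5 6 = -24 * phiZ j 2 0
    ∧ A5 (GZ j) 0 1 4 5 6 = -24 * phiZ j 2 3
    ∧ A5 (GZ j) 0 3 1 5 6 = -24 * phiZ j 2 4
    ∧ A5 (GZ j) 0 3 4 1 6 = -24 * phiZ j 2 5
    ∧ A5 (GZ j) 0 3 4 5 1 = -24 * phiZ j 2 6
    ∧ A5 (GZ j) 2 0 4 5 6 = 24 * phiZ j 3 1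
    ∧ A5 (GZ j) 1 0 4 5 6 = -24 * phiZ j 3 2
    ∧ A5 (GZ j) 2 1 4 5 6 = -24 * phiZ j 3 0
    ∧ A5 (GZ j) 2 0 1 5 6 = -24 * phiZ j 3 4
    ∧ A5 (GZ j) 2 0 4 1 6 = -24 * phiZ j 3 5
    ∧ A5 (GZ j) 2 0 4 5 1 = -24 * phiZ j 3 6
    ∧ A5 (GZ j) 2 3 0 5 6 = 24 * phiZ j 4 1
    ∧ A5 (GZ j) 1 3 0 5 6 = -24 * phiZ j 4 2
    ∧ A5 (GZ j) 2 1 0 5 6 = -24 * phiZ j 4 3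
    ∧ A5 (GZ j) 2 3 1 5 6 = -24 * phiZ j 4 0
    ∧ A5 (GZ j) 2 3 0 1 6 = -24 * phiZ j 4 5
    ∧ A5 (GZ j) 2 3 0 5 1 = -24 * phiZ j 4 6
    ∧ A5 (GZ j) 2 3 4 0 6 = 24 * phiZ j 5 1
    ∧ A5 (GZ j) 1 3 4 0 6 = -24 * phiZ j 5 2
    ∧ A5 (GZ j) 2 1 4 0 6 = -24 * phiZ j 5 3
    ∧ A5 (GZ j) 2 3 1 0 6 = -24 * phiZ j 5 4
    ∧ A5 (GZ j) 2 3 4 1 6 = -24 * phiZ j 5 0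
    ∧ A5 (GZ j) 2 3 4 0 1 = -24 * phiZ j 5 6
    ∧ A5 (GZ j) 2 3 4 5 0 = 24 * phiZ j 6 1
    ∧ A5 (GZ j) 1 3 4 5 0 = -24 * phiZ j 6 2
    ∧ A5 (GZ j) 2 1 4 5 0 = -24 * phiZ j 6 3
    ∧ A5 (GZ j) 2 3 1 5 0 = -24 * phiZ j 6 4
    ∧ A5 (GZ j) 2 3 4 1 0 = -24 * phiZ j 6 5
    ∧ A5 (GZ j) 2 3 4 5 1 = -24 * phiZ j 6 0 := by
  decide +kernel

theorem contr : ∀ i j l k : Fin 7,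
    -(∑ b, phiZ i l b * phiZ j k b)
      = (if l = j then 1 else 0) * (if i = k then 1 else 0)
        - (if i = j then 1 else 0) * (if l = k then 1 else 0) + A4 psi0Z i l j k := by
  decide +kernel

theorem phiZ_anti : ∀ j a b : Fin 7, phiZ j a b = -phiZ j b a := by decide +kernel

theorem phiZ_diag : ∀ j a : Fin 7, phiZ j a a = 0 := by decide +kernel

end helper

/-- Equation `wtwscubedcoreq` (coordinate form of Corollary `wtwscubedcor`) for the
standard G₂-structure on ℝ⁷. -/
theorem wtws_cubed_cor (i j l : Fin 7) (α : Fin 7 → ℝ) :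
    ∑ σ : Equiv.Perm (Fin 7),
      ((Equiv.Perm.sign σ : ℤ) : ℝ) *
        (α (σ 0) * phi i l (σ 1) * phi j (σ 2) (σ 3) * phi (σ 4) (σ 5) (σ 6))
      = 24 * (kdelta l j * α i - kdelta i j * α l + ∑ k, psi i l j k * α k) := by
  have h7 := sum_A7 id (fun a b c d e f g => α a * phi i l b * phi j c d * phi e f g)
  simp only [id] at h7
  rw [h7]
  have hc : ∀ k, -(∑ b, phi i l b * phi j k b)
      = kdelta l j * (if i = k then 1 else 0) - kdelta i j * (if l = k then 1 else 0)
        + psi i l j k := by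
    intro k
    have := congrArg (fun z : ℤ => (z : ℝ)) (contr i j l k)
    simp only [phi_cast, psi_cast, kdelta]
    push_cast at this
    exact this
  have hr : kdelta l j * α i - kdelta i j * α l + ∑ k, psi i l j k * α k
      = ∑ k, -(∑ b, phi i l b * phi j k b) * α k := by
    simp only [hc, add_mul, sub_mul, Finset.sum_add_distrib, Finset.sum_sub_distrib]
    simp
  rw [hr]
  simp only [A7, A6, A5lin]
  simp only [hT j, phi_cast]
  simp only [Fin.sum_univ_seven, phiZ_diag,
    phiZ_anti j 1 0, phiZ_anti j 2 0, phiZ_anti j 2 1, phiZ_anti j 3 0, phiZ_anti j 3 1,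
    phiZ_anti j 3 2, phiZ_anti j 4 0, phiZ_anti j 4 1, phiZ_anti j 4 2, phiZ_anti j 4 3,
    phiZ_anti j 5 0, phiZ_anti j 5 1, phiZ_anti j 5 2, phiZ_anti j 5 3, phiZ_anti j 5 4,
    phiZ_anti j 6 0, phiZ_anti j 6 1, phiZ_anti j 6 2, phiZ_anti j 6 3, phiZ_anti j 6 4,
    phiZ_anti j 6 5]
  push_cast
  ring
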